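/- arXiv:1802.03448 — 2 statements merged into one kernel-verified Lean document; each statement's English description precedes it below -/
import Mathlib

section
/- Let (G, ⋆, ∘) be a finite skew left brace and let G' be a ∘-stable subgroup of (G, ⋆), i.e., a subgroup of (G, ⋆) such that (g ∘ g') ⋆ g⁻¹ ∈ G' for all g in G and g' in G'. Then G' is also a subgroup of (G, ∘), hence is a sub-skew left brace of G. -/
section BraceIdentity

variable {G : Type*} [Group G] {circ : G → G → G}

theorem circ_one_of_brace (brace : ∀ g h k : G, circ g (h * k) = circ g h * g⁻¹ * circ g k)
    (g : G) : circ g 1 = g := by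
  have h : circ g 1 = circ g 1 * (g⁻¹ * circ g 1) := by
    simpa only [mul_one, mul_assoc] using brace g 1 1
  exact (inv_mul_eq_one.mp (left_eq_mul.mp h)).symm

theorem circ_left_identity_eq_one
    (brace : ∀ g h k : G, circ g (h * k) = circ g h * g⁻¹ * circ g k)
    {ce : G} (cid_left : ∀ a : G, circ ce a = a) : ce = 1 :=
  (circ_one_of_brace brace ce).symm.trans (cid_left 1)

end BraceIdentity

section CircStable

variable {G : Type*} [Group G] {circ : G → G → G} {G' : Subgroup G}

/- Stability says that `circ g x` and `g` lie in the same right coset of `G'`; reading this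
forwards and backwards gives closure under `circ` and under `circ`-inverses. -/
theorem circ_mem_iff_left_mem_of_stable (hstable : ∀ g : G, ∀ g' ∈ G', circ g g' * g⁻¹ ∈ G')
    (g : G) {x : G} (hx : x ∈ G') : circ g x ∈ G' ↔ g ∈ G' := by
  rw [← inv_mul_cancel_right (circ g x) g, G'.mul_mem_cancel_left (hstable g x hx)]

theorem circ_stable_subgroup_is_circ_subgroup_general {cinv : G → G} {ce : G}
    (cid_left : ∀ a : G, circ ce a = a)
    (cinv_left : ∀ a : G, circ (cinv a) a = ce)
    (brace : ∀ g h k : G, circ g (h * k) = circ g h * g⁻¹ * circ g k)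
    (hstable : ∀ g : G, ∀ g' ∈ G', circ g g' * g⁻¹ ∈ G') :
    ce ∈ G' ∧ (∀ x ∈ G', ∀ y ∈ G', circ x y ∈ G') ∧ (∀ x ∈ G', cinv x ∈ G') := by
  have ce_mem : ce ∈ G' := circ_left_identity_eq_one brace cid_left ▸ G'.one_mem
  refine ⟨ce_mem, fun x hx y hy ↦ ?_, fun x hx ↦ ?_⟩
  · exact (circ_mem_iff_left_mem_of_stable hstable x hy).mpr hx
  · exact (circ_mem_iff_left_mem_of_stable hstable (cinv x) hx).mp ((cinv_left x).symm ▸ ce_mem)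

end CircStable

/-- Let `(G, ⋆, ∘)` be a finite skew left brace and `G'` a `∘`-stable
subgroup of `(G, ⋆)`, i.e. `(g ∘ g') ⋆ g⁻¹ ∈ G'` for all `g ∈ G`, `g' ∈ G'`.
Then `G'` is also a subgroup of `(G, ∘)` (it contains the `∘`-identity and is closed
under `∘` and `∘`-inverses), hence is a sub-skew left brace of `G`. -/
theorem circ_stable_subgroup_is_circ_subgroup {G : Type*} [Group G] [Finite G]
    (circ : G → G → G) (cinv : G → G) (ce : G)
    (cassoc : ∀ a b c : G, circ (circ a b) c = circ a (circ b c))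
    (cid_left : ∀ a : G, circ ce a = a)
    (cid_right : ∀ a : G, circ a ce = a)
    (cinv_left : ∀ a : G, circ (cinv a) a = ce)
    (cinv_right : ∀ a : G, circ a (cinv a) = ce)
    (brace : ∀ g h k : G, circ g (h * k) = circ g h * g⁻¹ * circ g k)
    (G' : Subgroup G)
    (hstable : ∀ g : G, ∀ g' ∈ G', circ g g' * g⁻¹ ∈ G') :
    ce ∈ G' ∧ (∀ x ∈ G', ∀ y ∈ G', circ x y ∈ G') ∧ (∀ x ∈ G', cinv x ∈ G') :=
  circ_stable_subgroup_is_circ_subgroup_general cid_left cinv_left brace hstable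
end

section
/- Let G be a finite group with complementary subgroups H and J (|H||J| = |G|, H ∩ J = {e}), so every g ∈ G factors uniquely as g = g_l·g_r with g_l ∈ H, g_r ∈ J. Define g ∘ h = g_l · h · g_r for g = g_l g_r. Then (G, ·, ∘) is a skew left brace with additive group (G, ·), and (G, ∘) is isomorphic to H × J. -/
/-!
The group `H × J` acts on `G` by `(a, b) • x = a * x * b⁻¹`, and `G = HJ` being an exact
factorization says that the orbit map of `1` is a bijection. The operation `∘` is the
multiplication of `H × J` transported along that bijection. The brace identity is the fact that
`x ↦ a * x * b` is multiplicative up to its value `a * b` at `1`.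
-/

theorem mul_mul_mul_eq_mul_inv_mul {G : Type*} [Group G] (a b x y : G) :
    a * (x * y) * b = (a * x * b) * (a * b)⁻¹ * (a * y * b) := by
  group

section MulInvEquiv

variable {G : Type*} [Group G] {H J : Subgroup G}

/-- For complementary subgroups `H` and `J`, the orbit map `(a, b) ↦ a * b⁻¹` of `1` under the
action of `H × J` on `G` by left and right multiplication. The inverse on `J` turns right
multiplication into a left action, so that `H × J` appears rather than `H × Jᵐᵒᵖ`. -/
noncomputable def mulInvEquiv (hHJ : H.IsComplement' J) : H × J ≃ G :=
  ((Equiv.refl H).prodCongr (Equiv.inv J)).trans hHJ.equiv.symm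

theorem mulInvEquiv_apply (hHJ : H.IsComplement' J) (p : H × J) :
    mulInvEquiv hHJ p = p.1 * (p.2 : G)⁻¹ :=
  rfl

theorem mulInvEquiv_mul (hHJ : H.IsComplement' J) (p q : H × J) :
    mulInvEquiv hHJ (p * q) = p.1 * mulInvEquiv hHJ q * (p.2 : G)⁻¹ := by
  simp only [mulInvEquiv_apply, Prod.fst_mul, Prod.snd_mul, Subgroup.coe_mul, mul_inv_rev,
    mul_assoc]

theorem mulInvEquiv_symm_mul (hHJ : H.IsComplement' J) (a : H) (b : J) :
    (mulInvEquiv hHJ).symm (a * b) = (a, b⁻¹) := by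
  simp only [Equiv.symm_apply_eq, mulInvEquiv_apply, Subgroup.coe_inv, inv_inv]

theorem mulInvEquiv_symm_mul_mul (hHJ : H.IsComplement' J) (a : H) (x : G) (b : J) :
    (mulInvEquiv hHJ).symm (a * x * b) =
      (mulInvEquiv hHJ).symm (a * b) * (mulInvEquiv hHJ).symm x := by
  simp only [Equiv.symm_apply_eq, mulInvEquiv_mul, mulInvEquiv_symm_mul, Equiv.apply_symm_apply,
    Subgroup.coe_inv, inv_inv]

end MulInvEquiv

theorem exact_factorization_skew_brace_general {G : Type*} [Group G]
    (H J : Subgroup G)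
    (hint : H ⊓ J = ⊥)
    (l r : G → G) (hl : ∀ g, l g ∈ H) (hr : ∀ g, r g ∈ J)
    (hfac : ∀ g, g = l g * r g) :
    (∀ g h k : G, l g * (h * k) * r g =
      (l g * h * r g) * g⁻¹ * (l g * k * r g)) ∧
    (∃ e : G ≃ H × J, ∀ g h : G, e (l g * h * r g) = e g * e h) := by
  have hHJ : H.IsComplement' J :=
    Subgroup.isComplement'_of_disjoint_and_mul_eq_univ (disjoint_iff.mpr hint) <|
      Set.eq_univ_of_forall fun g => ⟨l g, hl g, r g, hr g, (hfac g).symm⟩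
  refine ⟨fun g h k => ?_, (mulInvEquiv hHJ).symm, fun g h => ?_⟩
  · simpa only [← hfac g] using mul_mul_mul_eq_mul_inv_mul (l g) (r g) h k
  · simpa only [← hfac g] using mulInvEquiv_symm_mul_mul hHJ ⟨l g, hl g⟩ h ⟨r g, hr g⟩

/-- Let `G` be a finite group with complementary subgroups `H`, `J`
(`|H|·|J| = |G|`, `H ∩ J = {e}`), so every `g ∈ G` factors uniquely as
`g = l g * r g` with `l g ∈ H`, `r g ∈ J`. Define `g ∘ h = l g * h * r g`.
Then `(G, ·, ∘)` is a skew left brace with additive group `(G, ·)` — i.e. the skew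
brace identity holds and `(G, ∘)` is a group — and `(G, ∘)` is isomorphic to
`H × J`. -/
theorem exact_factorization_skew_brace {G : Type*} [Group G] [Finite G]
    (H J : Subgroup G)
    (hcard : Nat.card H * Nat.card J = Nat.card G)
    (hint : H ⊓ J = ⊥)
    (l r : G → G) (hl : ∀ g, l g ∈ H) (hr : ∀ g, r g ∈ J)
    (hfac : ∀ g, g = l g * r g) :
    (∀ g h k : G, l g * (h * k) * r g =
      (l g * h * r g) * g⁻¹ * (l g * k * r g)) ∧
    (∃ e : G ≃ H × J, ∀ g h : G, e (l g * h * r g) = e g * e h) :=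
  exact_factorization_skew_brace_general H J hint l r hl hr hfac
end
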